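/- arXiv:2605.04464 — 2 statements merged into one kernel-verified Lean document; each statement's English description precedes it below -/
import Mathlib

section
/- Let R be a unital ring and let m > 1 and n > 1 be integers. Let S_m denote the standard polynomial of degree m, whose value at (a₁,…,a_m) ∈ R^m is Σ_{σ ∈ Sym(m)} sign(σ)·a_{σ(1)}⋯a_{σ(m)}, and let S_m(R) be the set of all such values. If R equals the additive subgroup generated by the set S_m(R)^[n] of products of n values of S_m, then there exists a positive integer N such that every x ∈ R can be written as x = a₁ + ⋯ + a_N with each a_i ∈ S_m(R)^[n]. -/
/-!
Let `L` be a Lie ideal of a ring `A`. The additive group `L * L` contains the two-sided ideal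
generated by all `⁅v, w⁆ * ⁅v, u⁆` with `v, w, u ∈ L`, and every `c = ⁅v, w⁆` satisfies
`c * q * c ≡ 0` modulo this ideal. As primitive ideals are semiprime, it is all of `A` as soon as
the commutators of `L` generate the unit ideal, and then `L ^ n = A` for all `n ≥ 2`.

The values of a multilinear polynomial span a Lie ideal. If its coefficients sum to zero and its
values generate the ring `R`, then the quotient of `R` by the commutators of values is commutative,
so that the polynomial vanishes on it and the quotient is zero. Hence the commutators of values
generate the unit ideal also in the ring `ℕ → R` of sequences, where sums of products of values are
therefore everything. Evaluating at a suitable index a sequence whose `k`-th term needs more than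
`k` summands gives the uniform bound.
-/

open scoped Pointwise

section IdealCore

variable {A : Type*} [Ring A]

/-- The largest two-sided ideal contained in an additive subgroup `M` of a ring. For a maximal
left ideal `M` it is the primitive ideal annihilating the simple module `A ⧸ M`. -/
def idealCore (M : AddSubgroup A) : TwoSidedIdeal A :=
  .mk' {a | ∀ x y, x * a * y ∈ M} (by simp)
    (fun ha hb x y ↦ by rw [mul_add, add_mul]; exact M.add_mem (ha x y) (hb x y))
    (fun ha x y ↦ by rw [mul_neg, neg_mul]; exact M.neg_mem (ha x y))
    (fun {a b} hb x y ↦ by rw [← mul_assoc x]; exact hb (x * a) y)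
    (fun {a b} ha x y ↦ by rw [← mul_assoc x, mul_assoc _ b]; exact ha x (b * y))

lemma mem_idealCore {M : AddSubgroup A} {a : A} :
    a ∈ idealCore M ↔ ∀ x y, x * a * y ∈ M :=
  TwoSidedIdeal.mem_mk' ..

lemma mem_of_mem_idealCore {M : AddSubgroup A} {a : A} (ha : a ∈ idealCore M) : a ∈ M := by
  simpa using mem_idealCore.1 ha 1 1

lemma eq_top_of_idealCore_eq_top {M : AddSubgroup A} (h : idealCore M = ⊤) : M = ⊤ :=
  eq_top_iff.2 fun _ _ ↦ mem_of_mem_idealCore (h ▸ TwoSidedIdeal.mem_top A)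

lemma mem_idealCore_of_isMaximal {M : Ideal A} (hM : M.IsMaximal) {c : A}
    (hc : ∀ q, c * q * c ∈ idealCore M.toAddSubgroup) : c ∈ idealCore M.toAddSubgroup := by
  refine mem_idealCore.2 fun x y ↦ ?_
  rw [mul_assoc]
  refine M.mul_mem_left x ?_
  by_contra hcy
  obtain ⟨t, m, hm, htm⟩ := hM.exists_inv hcy
  have hcqc : c * (y * t) * c * y ∈ M := by
    simpa using mem_idealCore.1 (hc (y * t)) 1 y
  have hsplit : c * y = c * (y * t) * c * y + c * y * m := by
    calc c * y = c * y * (t * (c * y) + m) := by rw [htm, mul_one]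
      _ = c * (y * t) * c * y + c * y * m := by noncomm_ring
  exact hcy (hsplit ▸ M.add_mem hcqc (M.mul_mem_left _ hm))

lemma twoSidedIdeal_eq_top_of_forall_mul_mul_mem {J : TwoSidedIdeal A} {C : Set A}
    (hC : ∀ c ∈ C, ∀ q, c * q * c ∈ J) (hspan : TwoSidedIdeal.span C = ⊤) : J = ⊤ := by
  by_contra hJ
  have hJ' : J.asIdeal ≠ ⊤ := fun h ↦ hJ <| (TwoSidedIdeal.one_mem_iff J).1 <|
    TwoSidedIdeal.mem_asIdeal.1 (h ▸ Submodule.mem_top)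
  obtain ⟨M, hM, hJM⟩ := J.asIdeal.exists_le_maximal hJ'
  have hJcore : J ≤ idealCore M.toAddSubgroup := fun a ha ↦ mem_idealCore.2 fun x y ↦
    hJM (TwoSidedIdeal.mem_asIdeal.2 (J.mul_mem_right _ y (J.mul_mem_left x _ ha)))
  have hspanM : TwoSidedIdeal.span C ≤ idealCore M.toAddSubgroup :=
    TwoSidedIdeal.span_le.2 fun c hc ↦
      mem_idealCore_of_isMaximal hM fun q ↦ hJcore (hC c hc q)
  have hone : (1 : A) ∈ idealCore M.toAddSubgroup := hspanM (hspan ▸ TwoSidedIdeal.mem_top A)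
  exact hM.ne_top ((Ideal.eq_top_iff_one M).2 (mem_of_mem_idealCore hone))

end IdealCore

section Commutators

attribute [local instance] LieRing.ofAssociativeRing

section CommutatorIdeal

variable {A B : Type*} [Ring A] [Ring B]

/-- The two-sided ideal generated by the commutators of elements of a subset `S` of a ring. -/
def commutatorIdeal (S : Set A) : TwoSidedIdeal A :=
  .span (Set.image2 (⁅·, ·⁆) S S)

lemma lie_mem_commutatorIdeal {S : Set A} {v w : A} (hv : v ∈ S) (hw : w ∈ S) :
    ⁅v, w⁆ ∈ commutatorIdeal S :=
  TwoSidedIdeal.subset_span (Set.mem_image2_of_mem hv hw)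

lemma commutatorIdeal_eq_top_of_mapsTo {S : Set A} {T : Set B} (f : A →+* B)
    (hf : Set.MapsTo f S T) (hS : commutatorIdeal S = ⊤) : commutatorIdeal T = ⊤ := by
  have hle : commutatorIdeal S ≤ (commutatorIdeal T).comap f := by
    refine TwoSidedIdeal.span_le.2 ?_
    rintro _ ⟨v, hv, w, hw, rfl⟩
    refine (TwoSidedIdeal.mem_comap f).2 ?_
    simpa only [Ring.lie_def, map_sub, map_mul] using lie_mem_commutatorIdeal (hf hv) (hf hw)
  have hone : f 1 ∈ commutatorIdeal T :=
    (TwoSidedIdeal.mem_comap f).1 (hle (hS ▸ TwoSidedIdeal.mem_top A))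
  exact (commutatorIdeal T).one_mem_iff.1 (map_one f ▸ hone)

lemma twoSidedIdeal_eq_top_of_nonUnitalSubringClosure_eq_top {S : Set A} {I : TwoSidedIdeal A}
    (hS : NonUnitalSubring.closure S = ⊤) (hSI : S ⊆ I) : I = ⊤ := by
  refine top_le_iff.1 fun x _ ↦ ?_
  induction (hS ▸ NonUnitalSubring.mem_top x : x ∈ NonUnitalSubring.closure S) using
    NonUnitalSubring.closure_induction with
  | mem x hx => exact hSI hx
  | zero => exact I.zero_mem
  | add x y _ _ hx hy => exact I.add_mem (hx trivial) (hy trivial)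
  | neg x _ hx => exact I.neg_mem (hx trivial)
  | mul x y _ _ _ hy => exact I.mul_mem_left x y (hy trivial)

lemma lie_mem_commutatorIdeal_of_closure_eq_top {S : Set A}
    (hS : NonUnitalSubring.closure S = ⊤) (x y : A) : ⁅x, y⁆ ∈ commutatorIdeal S := by
  set I := commutatorIdeal S
  have hmem (z : A) : z ∈ NonUnitalSubring.closure S := hS ▸ NonUnitalSubring.mem_top z
  induction hmem x, hmem y using NonUnitalSubring.closure_induction₂ with
  | mem_mem v w hv hw => exact lie_mem_commutatorIdeal hv hw
  | zero_left y => simp only [zero_lie, I.zero_mem]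
  | zero_right x => simp only [lie_zero, I.zero_mem]
  | neg_left x y _ _ h => exact (neg_lie x y).symm ▸ I.neg_mem h
  | neg_right x y _ _ h => exact (lie_neg x y).symm ▸ I.neg_mem h
  | add_left x y z _ _ _ hx hy => exact (add_lie x y z).symm ▸ I.add_mem hx hy
  | add_right x y z _ _ _ hy hz => exact (lie_add x y z).symm ▸ I.add_mem hy hz
  | mul_left x y z _ _ _ hx hy =>
    have hleibniz : ⁅x * y, z⁆ = x * ⁅y, z⁆ + ⁅x, z⁆ * y := by
      simp only [Ring.lie_def]
      noncomm_ring
    exact hleibniz ▸ I.add_mem (I.mul_mem_left _ _ hy) (I.mul_mem_right _ _ hx)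
  | mul_right x y z _ _ _ hy hz =>
    have hleibniz : ⁅x, y * z⁆ = y * ⁅x, z⁆ + ⁅x, y⁆ * z := by
      simp only [Ring.lie_def]
      noncomm_ring
    exact hleibniz ▸ I.add_mem (I.mul_mem_left _ _ hz) (I.mul_mem_right _ _ hy)

end CommutatorIdeal

section LieIdeal

variable {k A : Type*} [CommRing k] [Ring A] [Algebra k A] {L : LieIdeal k A}

lemma mul_lie_mul_lie_mem {v w u : A} (hv : v ∈ L) (hw : w ∈ L) (hu : u ∈ L) (x : A) :
    x * (⁅v, w⁆ * ⁅v, u⁆) ∈ L.toSubmodule * L.toSubmodule := by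
  have key : x * (⁅v, w⁆ * ⁅v, u⁆) = ⁅x * v, w⁆ * ⁅v, u⁆ + ⁅x, w⁆ * ⁅v * u, v⁆ := by
    simp only [Ring.lie_def]
    noncomm_ring
  rw [key]
  exact add_mem (Submodule.mul_mem_mul (L.lie_mem hw) (L.lie_mem hu))
    (Submodule.mul_mem_mul (L.lie_mem hw) (L.lie_mem hv))

lemma lie_mul_lie_mem_idealCore {v w u : A} (hv : v ∈ L) (hw : w ∈ L) (hu : u ∈ L) :
    ⁅v, w⁆ * ⁅v, u⁆ ∈ idealCore (L.toSubmodule * L.toSubmodule).toAddSubgroup := by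
  refine mem_idealCore.2 fun x y ↦ ?_
  have hv' : ⁅y, v⁆ ∈ L := L.lie_mem hv
  have hw' : ⁅y, w⁆ ∈ L := L.lie_mem hw
  have hu' : ⁅y, u⁆ ∈ L := L.lie_mem hu
  -- Move `y` to the left by the Leibniz rule; the two terms that differentiate a `v` are the
  -- polarisation of `v ↦ ⁅v, w⁆ * ⁅v, u⁆` in the direction `⁅y, v⁆`.
  have key : x * (⁅v, w⁆ * ⁅v, u⁆) * y =
      x * y * (⁅v, w⁆ * ⁅v, u⁆)
        - (x * (⁅v, ⁅y, w⁆⁆ * ⁅v, u⁆) + x * (⁅v, w⁆ * ⁅v, ⁅y, u⁆⁆))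
        - (x * (⁅v + ⁅y, v⁆, w⁆ * ⁅v + ⁅y, v⁆, u⁆) - x * (⁅v, w⁆ * ⁅v, u⁆)
          - x * (⁅⁅y, v⁆, w⁆ * ⁅⁅y, v⁆, u⁆)) := by
    simp only [Ring.lie_def]
    noncomm_ring
  rw [key]
  exact sub_mem
    (sub_mem (mul_lie_mul_lie_mem hv hw hu _)
      (add_mem (mul_lie_mul_lie_mem hv hw' hu x) (mul_lie_mul_lie_mem hv hw hu' x)))
    (sub_mem (sub_mem (mul_lie_mul_lie_mem (add_mem hv hv') hw hu x)
      (mul_lie_mul_lie_mem hv hw hu x)) (mul_lie_mul_lie_mem hv' hw hu x))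

lemma lie_mul_mul_lie_mem_idealCore {v w : A} (hv : v ∈ L) (hw : w ∈ L) (q : A) :
    ⁅v, w⁆ * q * ⁅v, w⁆ ∈ idealCore (L.toSubmodule * L.toSubmodule).toAddSubgroup := by
  have key : ⁅v, w⁆ * q * ⁅v, w⁆ =
      ⁅v, w⁆ * ⁅v, w⁆ * q + ⁅v, w⁆ * ⁅v, ⁅q, w⁆⁆ + ⁅w, v⁆ * ⁅w, ⁅q, v⁆⁆ := by
    simp only [Ring.lie_def]
    noncomm_ring
  rw [key]
  exact add_mem (add_mem (TwoSidedIdeal.mul_mem_right _ _ q (lie_mul_lie_mem_idealCore hv hw hw))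
    (lie_mul_lie_mem_idealCore hv hw (L.lie_mem hw)))
    (lie_mul_lie_mem_idealCore hw hv (L.lie_mem hv))

theorem toSubmodule_pow_eq_top_of_commutatorIdeal_eq_top
    (hL : commutatorIdeal (L : Set A) = ⊤) {n : ℕ} (hn : 2 ≤ n) :
    L.toSubmodule ^ n = ⊤ := by
  have hsq : L.toSubmodule * L.toSubmodule = ⊤ := by
    refine Submodule.toAddSubgroup_injective (eq_top_of_idealCore_eq_top ?_)
    refine twoSidedIdeal_eq_top_of_forall_mul_mul_mem ?_ hL
    rintro _ ⟨v, hv, w, hw, rfl⟩ q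
    exact lie_mul_mul_lie_mem_idealCore hv hw q
  induction n, hn using Nat.le_induction with
  | base => rw [pow_two, hsq]
  | succ n _ ih =>
    refine top_le_iff.1 ?_
    calc ⊤ = L.toSubmodule * L.toSubmodule := hsq.symm
      _ ≤ ⊤ * L.toSubmodule := mul_le_mul_left le_top _
      _ = L.toSubmodule ^ (n + 1) := by rw [pow_succ, ih]

end LieIdeal

section MultilinearPoly

variable {k A B : Type*} [CommRing k] [Ring A] [Algebra k A] [Ring B] [Algebra k B] {m : ℕ}

/-- The multilinear polynomial `∑ σ, c σ X_{σ(1)} ⋯ X_{σ(m)}` in noncommuting variables with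
coefficients `c`, as a multilinear map on `A`. The standard polynomial is the case
`c = Equiv.Perm.sign`. -/
def multilinearPoly (c : Equiv.Perm (Fin m) → k) (A : Type*) [Ring A] [Algebra k A] :
    MultilinearMap k (fun _ : Fin m ↦ A) A :=
  ∑ σ, c σ • (MultilinearMap.mkPiAlgebraFin k m A).domDomCongr σ

lemma multilinearPoly_apply (c : Equiv.Perm (Fin m) → k) (a : Fin m → A) :
    multilinearPoly c A a = ∑ σ, c σ • (List.ofFn fun i ↦ a (σ i)).prod := by
  simp [multilinearPoly]

lemma map_multilinearPoly (c : Equiv.Perm (Fin m) → k) (f : A →ₐ[k] B) (a : Fin m → A) :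
    f (multilinearPoly c A a) = multilinearPoly c B (f ∘ a) := by
  simp only [multilinearPoly_apply, map_sum, map_smul, map_list_prod, List.map_ofFn,
    Function.comp_def]

lemma mapsTo_range_multilinearPoly (c : Equiv.Perm (Fin m) → k) (f : A →ₐ[k] B) :
    Set.MapsTo f (Set.range (multilinearPoly c A)) (Set.range (multilinearPoly c B)) := by
  rintro _ ⟨a, rfl⟩
  exact ⟨f ∘ a, (map_multilinearPoly c f a).symm⟩

lemma multilinearPoly_apply_of_commute (c : Equiv.Perm (Fin m) → k) {a : Fin m → A}
    (ha : ∀ i j, Commute (a i) (a j)) :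
    multilinearPoly c A a = (∑ σ, c σ) • (List.ofFn a).prod := by
  have hprod (σ : Equiv.Perm (Fin m)) : (List.ofFn fun i ↦ a (σ i)).prod = (List.ofFn a).prod :=
    (Equiv.Perm.ofFn_comp_perm σ a).prod_eq'
      (List.pairwise_ofFn.2 fun i j _ ↦ ha (σ i) (σ j))
  simp only [multilinearPoly_apply, hprod, Finset.sum_smul]

lemma lie_prod_ofFn (x : A) (a : Fin m → A) :
    ⁅x, (List.ofFn a).prod⁆ = ∑ i, (List.ofFn (Function.update a i ⁅x, a i⁆)).prod := by
  induction m with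
  | zero => simp [Ring.lie_def]
  | succ m ih =>
    have hzero : (List.ofFn (Function.update a 0 ⁅x, a 0⁆)).prod =
        ⁅x, a 0⁆ * (List.ofFn fun i ↦ a i.succ).prod := by
      simp [List.ofFn_succ]
    have hsucc (i : Fin m) : (List.ofFn (Function.update a i.succ ⁅x, a i.succ⁆)).prod =
        a 0 * (List.ofFn (Function.update (fun j ↦ a j.succ) i ⁅x, a i.succ⁆)).prod := by
      rw [List.ofFn_succ, List.prod_cons, Function.update_of_ne (Fin.succ_ne_zero i).symm]
      exact congrArg (fun b ↦ a 0 * (List.ofFn b).prod)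
        (Function.update_comp_eq_of_injective a (Fin.succ_injective m) i _)
    rw [Fin.sum_univ_succ, hzero, Finset.sum_congr rfl fun i _ ↦ hsucc i, ← Finset.mul_sum, ← ih,
      List.ofFn_succ, List.prod_cons]
    simp only [Ring.lie_def]
    noncomm_ring

lemma lie_multilinearPoly (c : Equiv.Perm (Fin m) → k) (x : A) (a : Fin m → A) :
    ⁅x, multilinearPoly c A a⁆ = ∑ j, multilinearPoly c A (Function.update a j ⁅x, a j⁆) := by
  have hperm (σ : Equiv.Perm (Fin m)) : ⁅x, (List.ofFn fun i ↦ a (σ i)).prod⁆ =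
      ∑ j, (List.ofFn fun i ↦ Function.update a j ⁅x, a j⁆ (σ i)).prod := by
    rw [lie_prod_ofFn, ← Equiv.sum_comp σ fun j ↦
      (List.ofFn fun i ↦ Function.update a j ⁅x, a j⁆ (σ i)).prod]
    refine Finset.sum_congr rfl fun i _ ↦ congrArg (fun b ↦ (List.ofFn b).prod) ?_
    exact (Function.update_comp_eq_of_injective a σ.injective i _).symm
  calc ⁅x, multilinearPoly c A a⁆
      = ∑ σ, c σ • ⁅x, (List.ofFn fun i ↦ a (σ i)).prod⁆ := by
        simp only [multilinearPoly_apply, Ring.lie_def, Finset.mul_sum, Finset.sum_mul,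
          mul_smul_comm, smul_mul_assoc, smul_sub, Finset.sum_sub_distrib]
    _ = ∑ σ, ∑ j, c σ • (List.ofFn fun i ↦ Function.update a j ⁅x, a j⁆ (σ i)).prod := by
        simp only [hperm, Finset.smul_sum]
    _ = ∑ j, multilinearPoly c A (Function.update a j ⁅x, a j⁆) := by
        rw [Finset.sum_comm]
        simp only [multilinearPoly_apply]

/-- The Lie ideal additively spanned by the values of a multilinear polynomial. -/
def multilinearPolyLieIdeal (c : Equiv.Perm (Fin m) → k) (A : Type*) [Ring A] [Algebra k A] :
    LieIdeal ℤ A where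
  __ := Submodule.span ℤ (Set.range (multilinearPoly c A))
  lie_mem {x v} hv := by
    have hle : Submodule.span ℤ (Set.range (multilinearPoly c A)) ≤
        (Submodule.span ℤ (Set.range (multilinearPoly c A))).comap
          (LieAlgebra.ad ℤ A x) := by
      rw [Submodule.span_le]
      rintro _ ⟨a, rfl⟩
      simp only [Submodule.comap_coe, Set.mem_preimage, LieAlgebra.ad_apply,
        lie_multilinearPoly]
      exact sum_mem fun j _ ↦ Submodule.subset_span ⟨_, rfl⟩
    exact hle hv

lemma range_multilinearPoly_subset (c : Equiv.Perm (Fin m) → k) :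
    Set.range (multilinearPoly c A) ⊆ multilinearPolyLieIdeal c A :=
  Submodule.subset_span

lemma addSubgroupClosure_range_multilinearPoly_pow_eq_top (c : Equiv.Perm (Fin m) → k)
    (h : commutatorIdeal (Set.range (multilinearPoly c A)) = ⊤) {n : ℕ} (hn : 2 ≤ n) :
    AddSubgroup.closure (Set.range (multilinearPoly c A) ^ n) = ⊤ := by
  have hL : commutatorIdeal (multilinearPolyLieIdeal c A : Set A) = ⊤ :=
    commutatorIdeal_eq_top_of_mapsTo (RingHom.id A) (range_multilinearPoly_subset c) h
  have hspan : Submodule.span ℤ (Set.range (multilinearPoly c A)) ^ n = ⊤ :=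
    toSubmodule_pow_eq_top_of_commutatorIdeal_eq_top hL hn
  rw [← Submodule.span_int_eq_addSubgroupClosure, ← Submodule.span_pow, hspan]
  rfl

lemma multilinearPoly_mem_of_forall_lie_mem {c : Equiv.Perm (Fin m) → k} (hc : ∑ σ, c σ = 0)
    {I : TwoSidedIdeal A} (hI : ∀ x y : A, ⁅x, y⁆ ∈ I) (a : Fin m → A) :
    multilinearPoly c A a ∈ I := by
  let π : A →ₐ[k] I.ringCon.Quotient := I.ringCon.mkₐ k
  have hker (x : A) : π x = 0 ↔ x ∈ I := by
    conv_rhs => rw [← TwoSidedIdeal.ker_ringCon_mk' I, TwoSidedIdeal.mem_ker]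
    rfl
  have hcomm (i j : Fin m) : Commute ((π ∘ a) i) ((π ∘ a) j) := by
    simpa only [Ring.lie_def, map_sub, map_mul, sub_eq_zero, Commute, SemiconjBy,
      Function.comp_apply] using (hker _).2 (hI (a i) (a j))
  rw [← hker, map_multilinearPoly, multilinearPoly_apply_of_commute c hcomm, hc, zero_smul]

theorem commutatorIdeal_range_multilinearPoly_eq_top {c : Equiv.Perm (Fin m) → k}
    (hc : ∑ σ, c σ = 0)
    (hgen : NonUnitalSubring.closure (Set.range (multilinearPoly c A)) = ⊤) :
    commutatorIdeal (Set.range (multilinearPoly c A)) = ⊤ :=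
  twoSidedIdeal_eq_top_of_nonUnitalSubringClosure_eq_top hgen <| Set.range_subset_iff.2 <|
    multilinearPoly_mem_of_forall_lie_mem hc (lie_mem_commutatorIdeal_of_closure_eq_top hgen)

end MultilinearPoly

end Commutators

section BoundedSums

lemma exists_forall_eq_sum_of_closure_pi_eq_top {G : Type*} [AddCommGroup G] {T : Set G}
    (hzero : 0 ∈ T) (hneg : ∀ t ∈ T, -t ∈ T)
    (hgen : AddSubgroup.closure (Set.univ.pi fun _ : ℕ ↦ T) = ⊤) :
    ∃ N : ℕ, 0 < N ∧ ∀ x : G, ∃ a : Fin N → G, (∀ i, a i ∈ T) ∧ x = ∑ i, a i := by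
  by_contra! hcon
  choose! x hx using hcon
  have hmem : (fun k ↦ x (k + 1)) ∈ AddSubmonoid.closure
      ((Set.univ.pi fun _ : ℕ ↦ T) ∪ -(Set.univ.pi fun _ : ℕ ↦ T)) := by
    rw [← AddSubgroup.closure_toAddSubmonoid, hgen]
    exact AddSubgroup.mem_top _
  obtain ⟨l, hl, hsum⟩ := AddSubmonoid.exists_list_of_mem_closure hmem
  have hlT (f : ℕ → G) (hf : f ∈ l) (k : ℕ) : f k ∈ T := by
    rcases hl f hf with h | h
    · exact h k trivial
    · simpa using hneg _ (h k trivial)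
  refine hx (l.length + 1) l.length.succ_pos (Fin.cons 0 fun i ↦ l[i.1] l.length)
    (Fin.cases hzero fun i ↦ hlT _ (l.getElem_mem i.2) _) ?_
  rw [Fin.sum_cons, zero_add, ← Finset.sum_apply, Fin.sum_univ_getElem, hsum]

variable {A : Type*} [Ring A]

lemma neg_mem_pow_of_forall_neg_mem {S : Set A} (hneg : ∀ s ∈ S, -s ∈ S) {n : ℕ} (hn : n ≠ 0)
    {x : A} (hx : x ∈ S ^ n) : -x ∈ S ^ n := by
  obtain ⟨n, rfl⟩ := Nat.exists_eq_succ_of_ne_zero hn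
  rw [Nat.succ_eq_add_one, pow_succ'] at hx ⊢
  obtain ⟨s, hs, y, hy, rfl⟩ := hx
  exact ⟨-s, hneg s hs, y, hy, neg_mul s y⟩

lemma addSubgroupClosure_pow_le_nonUnitalSubringClosure (S : Set A) {n : ℕ} (hn : n ≠ 0) :
    AddSubgroup.closure (S ^ n) ≤ (NonUnitalSubring.closure S).toAddSubgroup := by
  rw [AddSubgroup.closure_le]
  induction n, Nat.one_le_iff_ne_zero.2 hn using Nat.le_induction with
  | base => simp [NonUnitalSubring.subset_closure]
  | succ n hn ih =>
    rw [pow_succ, Set.mul_subset_iff]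
    exact fun x hx y hy ↦ (NonUnitalSubring.closure S).mul_mem (ih (by lia) hx)
      (NonUnitalSubring.subset_closure hy)

end BoundedSums

lemma sum_sign_eq_zero {ι : Type*} [Fintype ι] [DecidableEq ι] [Nontrivial ι] :
    ∑ σ : Equiv.Perm ι, (Equiv.Perm.sign σ : ℤ) = 0 := by
  obtain ⟨i, j, hij⟩ := exists_pair_ne ι
  have h := Equiv.sum_comp (Equiv.mulLeft (Equiv.swap i j))
    fun σ : Equiv.Perm ι ↦ (Equiv.Perm.sign σ : ℤ)
  simp only [Equiv.coe_mulLeft, Equiv.Perm.sign_mul, Equiv.Perm.sign_swap hij, Units.val_neg,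
    neg_one_mul, Finset.sum_neg_distrib] at h
  lia

lemma setOf_prod_ofFn_eq_pow {M : Type*} [Monoid M] (S : Set M) (n : ℕ) :
    {x : M | ∃ v : Fin n → M, (∀ i, v i ∈ S) ∧ x = (List.ofFn v).prod} = S ^ n := by
  ext x
  rw [Set.mem_pow]
  exact ⟨fun ⟨v, hv, hx⟩ ↦ ⟨fun i ↦ ⟨v i, hv i⟩, hx.symm⟩,
    fun ⟨v, hx⟩ ↦ ⟨fun i ↦ v i, fun i ↦ (v i).2, hx.symm⟩⟩

lemma setOf_sum_sign_smul_prod_eq_range (R : Type*) [Ring R] (m : ℕ) :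
    {y : R | ∃ a : Fin m → R, y = ∑ σ : Equiv.Perm (Fin m),
      (Equiv.Perm.sign σ : ℤ) • (List.ofFn fun i => a (σ i)).prod} =
    Set.range (multilinearPoly (fun σ : Equiv.Perm (Fin m) ↦ (Equiv.Perm.sign σ : ℤ)) R) := by
  ext y
  simp only [Set.mem_ofPred_eq, Set.mem_range, multilinearPoly_apply, eq_comm]

theorem stmt_6_general {k R : Type*} [CommRing k] [Ring R] [Algebra k R] {m n : ℕ}
    (hm : 0 < m) (hn : 1 < n) {c : Equiv.Perm (Fin m) → k} (hc : ∑ σ, c σ = 0)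
    (hgen : NonUnitalSubring.closure (Set.range (multilinearPoly c R)) = ⊤) :
    ∃ N : ℕ, 0 < N ∧ ∀ x : R, ∃ a : Fin N → R,
      (∀ i, a i ∈ Set.range (multilinearPoly c R) ^ n) ∧ x = ∑ i, a i := by
  have hn0 : n ≠ 0 := by lia
  have hzero : (0 : R) ∈ Set.range (multilinearPoly c R) :=
    ⟨0, MultilinearMap.map_coord_zero _ ⟨0, hm⟩ rfl⟩
  have hneg : ∀ s ∈ Set.range (multilinearPoly c R), -s ∈ Set.range (multilinearPoly c R) := by
    rintro _ ⟨a, rfl⟩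
    refine ⟨Function.update a ⟨0, hm⟩ (-a ⟨0, hm⟩), ?_⟩
    rw [MultilinearMap.map_update_neg, Function.update_eq_self]
  have hseq : AddSubgroup.closure (Set.range (multilinearPoly c (ℕ → R)) ^ n) = ⊤ :=
    addSubgroupClosure_range_multilinearPoly_pow_eq_top c
      (commutatorIdeal_eq_top_of_mapsTo (Pi.constRingHom ℕ R)
        (mapsTo_range_multilinearPoly c (Pi.constAlgHom k ℕ R))
        (commutatorIdeal_range_multilinearPoly_eq_top hc hgen)) hn
  have hpi : Set.range (multilinearPoly c (ℕ → R)) ^ n ⊆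
      Set.univ.pi fun _ ↦ Set.range (multilinearPoly c R) ^ n := fun f hf i _ ↦
    Set.pow_subset_pow_left
      (mapsTo_range_multilinearPoly c (Pi.evalAlgHom k (fun _ ↦ R) i)).image_subset
      (Set.image_pow (Pi.evalAlgHom k (fun _ ↦ R) i) _ n ▸ Set.mem_image_of_mem _ hf)
  exact exists_forall_eq_sum_of_closure_pi_eq_top
    (by simpa [hn0] using Set.pow_mem_pow (n := n) hzero)
    (fun t ↦ neg_mem_pow_of_forall_neg_mem hneg hn0)
    (top_le_iff.1 (hseq ▸ AddSubgroup.closure_mono hpi))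

/-- Let `R` be a unital ring, `m > 1`, `n > 1`, and let `S_m` be the
standard polynomial of degree `m`. If `R` equals the additive subgroup generated by the
set of products of `n` values of `S_m` on `R`, then there is `N ≥ 1` such that every
`x ∈ R` is a sum of `N` such products. -/
theorem stmt_6 (R : Type*) [Ring R] (m n : ℕ) (hm : 1 < m) (hn : 1 < n)
    (hgen : AddSubgroup.closure
        {x : R | ∃ v : Fin n → R,
          (∀ i, v i ∈ {y : R | ∃ a : Fin m → R,
            y = ∑ σ : Equiv.Perm (Fin m),
              (Equiv.Perm.sign σ : ℤ) • (List.ofFn fun i => a (σ i)).prod}) ∧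
          x = (List.ofFn v).prod} = ⊤) :
    ∃ N : ℕ, 0 < N ∧ ∀ x : R, ∃ a : Fin N → R,
      (∀ i, a i ∈ {x : R | ∃ v : Fin n → R,
          (∀ i, v i ∈ {y : R | ∃ a : Fin m → R,
            y = ∑ σ : Equiv.Perm (Fin m),
              (Equiv.Perm.sign σ : ℤ) • (List.ofFn fun i => a (σ i)).prod}) ∧
          x = (List.ofFn v).prod}) ∧
      x = ∑ i, a i := by
  have := Fin.nontrivial_iff_two_le.2 hm
  rw [setOf_sum_sign_smul_prod_eq_range, setOf_prod_ofFn_eq_pow] at hgen ⊢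
  exact stmt_6_general (by lia) hn sum_sign_eq_zero <| NonUnitalSubring.toAddSubgroup_injective <|
    top_le_iff.1 <| hgen ▸ addSubgroupClosure_pow_le_nonUnitalSubringClosure _ (by lia)
end

section
/- Let D be a division ring with center F such that every element of D is algebraic over F (i.e., for every a ∈ D there is a nonzero polynomial with coefficients in F vanishing at a), and let n ≥ 2 be an integer. Then every matrix A ∈ M_n(D) can be written as A = (BC − CB)·(EG − GE) for some B, C, E, G ∈ M_n(D). -/
/-!
A matrix in the form `X * Y - Y * X` is produced by a Sylvester equation: if `X` is `1` plus a
nilpotent on a set of indices and nilpotent on the complement, then the off-diagonal blocks of the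
commutator are arbitrary, and with shifts for the nilpotents each triangular diagonal block of trace
zero occurs. Splitting the indices by parity, an upper Hessenberg matrix is a commutator as soon as
its even and its odd diagonal entries both sum to zero.

Let `d` be a family of nonzero elements with sum zero. A non-central `A` is similar to an upper
Hessenberg matrix `B` with `B 1 0 ≠ 0` such that the odd diagonal entries of `diagonal d⁻¹ * B` sum
to zero. Then `B = ((1 - N) * diagonal d) * (diagonal d⁻¹ * (1 + N) * B)` for `N` a multiple of the
matrix unit at `(0, 1)`, chosen to correct the even diagonal sum of the second factor; the first
factor is triangular of trace zero. Such a `d` is missing only over the field with two elements and in odd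
size. There, trace zero matrices are commutators, and a transposition matrix replaces
`diagonal d`. A central `A` is `W * (W⁻¹ * A)` with `W` a cyclic permutation matrix.
-/

open Matrix

section Ring

variable {R S : Type*} [Ring R] [Ring S]

/-- `a` is an additive commutator: a value of `x * y - y * x`. -/
def IsAddCommutator (a : R) : Prop :=
  ∃ x y : R, a = x * y - y * x

/-- `a` is a product of two additive commutators. -/
def IsAddCommutatorProduct (a : R) : Prop :=
  ∃ p q : R, IsAddCommutator p ∧ IsAddCommutator q ∧ a = p * q

theorem IsAddCommutator.map {a : R} (ha : IsAddCommutator a) (f : R →+* S) :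
    IsAddCommutator (f a) := by
  obtain ⟨x, y, rfl⟩ := ha
  exact ⟨f x, f y, by simp only [map_sub, map_mul]⟩

theorem IsAddCommutator.mul_of_mem_center {a c : R} (ha : IsAddCommutator a)
    (hc : c ∈ Set.center R) : IsAddCommutator (a * c) := by
  obtain ⟨x, y, rfl⟩ := ha
  refine ⟨x, y * c, ?_⟩
  rw [sub_mul, mul_assoc, mul_assoc, mul_assoc, (hc.comm x).eq]

theorem IsAddCommutatorProduct.map {a : R} (ha : IsAddCommutatorProduct a) (f : R →+* S) :
    IsAddCommutatorProduct (f a) := by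
  obtain ⟨p, q, hp, hq, rfl⟩ := ha
  exact ⟨f p, f q, hp.map f, hq.map f, map_mul f p q⟩

theorem exists_ringEquiv_of_isConj {a b : R} (h : IsConj a b) : ∃ e : R ≃+* R, e a = b := by
  obtain ⟨u, hu⟩ := h
  refine ⟨MulSemiringAction.toRingEquiv (ConjAct Rˣ) R (ConjAct.toConjAct u), ?_⟩
  change (ConjAct.toConjAct u) • a = b
  rw [ConjAct.units_smul_def, ConjAct.ofConjAct_toConjAct, hu.eq, Units.mul_inv_cancel_right]

theorem IsAddCommutator.of_isConj {a b : R} (hb : IsAddCommutator b) (h : IsConj a b) :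
    IsAddCommutator a := by
  obtain ⟨e, rfl⟩ := exists_ringEquiv_of_isConj h.symm
  exact hb.map (e : R →+* R)

theorem IsAddCommutatorProduct.of_isConj {a b : R} (hb : IsAddCommutatorProduct b)
    (h : IsConj a b) : IsAddCommutatorProduct a := by
  obtain ⟨e, rfl⟩ := exists_ringEquiv_of_isConj h.symm
  exact hb.map (e : R →+* R)

end Ring

section Sylvester

variable {m n R : Type*} [Fintype m] [Fintype n] [DecidableEq m] [DecidableEq n] [Ring R]

theorem exists_mul_sub_mul_eq {U : Matrix m m R} {X : Matrix n n R} (hU : IsUnit U)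
    (hX : IsNilpotent X) (B : Matrix m n R) : ∃ P : Matrix m n R, U * P - P * X = B := by
  obtain ⟨⟨U, V, hUV, -⟩, rfl⟩ := hU
  obtain ⟨N, hN⟩ := hX
  refine ⟨∑ k ∈ Finset.range N, V ^ (k + 1) * B * X ^ k, ?_⟩
  have hterm (k : ℕ) : U * (V ^ (k + 1) * B * X ^ k) - V ^ (k + 1) * B * X ^ k * X =
      V ^ k * B * X ^ k - V ^ (k + 1) * B * X ^ (k + 1) := by
    rw [Matrix.mul_assoc (V ^ (k + 1) * B), ← pow_succ, ← Matrix.mul_assoc, ← Matrix.mul_assoc,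
      pow_succ' V, ← Matrix.mul_assoc U, hUV, Matrix.one_mul]
  rw [Matrix.mul_sum, Matrix.sum_mul, ← Finset.sum_sub_distrib,
    Finset.sum_congr rfl fun k _ => hterm k, Finset.sum_range_sub', hN]
  simp

theorem isAddCommutator_fromBlocks {X₁ Y₁ : Matrix m m R} {X₂ Y₂ : Matrix n n R}
    (h₁ : IsNilpotent X₁) (h₂ : IsNilpotent X₂) (B : Matrix m n R) (C : Matrix n m R) :
    IsAddCommutator
      (fromBlocks (X₁ * Y₁ - Y₁ * X₁) B C (X₂ * Y₂ - Y₂ * X₂)) := by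
  -- Both Sylvester equations are solvable as `1 + X₁` is invertible and `X₂` is nilpotent.
  obtain ⟨P, hP⟩ := exists_mul_sub_mul_eq h₁.isUnit_one_add h₂ B
  obtain ⟨Q, hQ⟩ := exists_mul_sub_mul_eq h₂.isUnit_one_sub h₁.neg (-C)
  have hC : X₂ * Q - Q * (1 + X₁) = C := by
    rw [← neg_inj, ← hQ]
    simp only [Matrix.sub_mul, Matrix.mul_add, Matrix.mul_neg, Matrix.one_mul, Matrix.mul_one]
    abel
  refine ⟨fromBlocks (1 + X₁) 0 0 X₂, fromBlocks Y₁ P Q Y₂, ?_⟩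
  rw [fromBlocks_multiply, fromBlocks_multiply, eq_sub_iff_add_eq, fromBlocks_add, fromBlocks_inj]
  simp only [Matrix.zero_mul, Matrix.mul_zero, add_zero, zero_add]
  refine ⟨?_, ?_, ?_, sub_add_cancel _ _⟩
  · simp only [Matrix.add_mul, Matrix.mul_add, Matrix.one_mul, Matrix.mul_one]
    abel
  · exact eq_sub_iff_add_eq.1 hP.symm
  · exact eq_sub_iff_add_eq.1 hC.symm

end Sylvester

section Shift

variable {R : Type*}

/-- The function `y` with `y 0 j = 0` solving the equation `N * y - y * N = f` for the infinite
shift matrix `N` with ones on the superdiagonal, which reads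
`y (i + 1) (j + 1) - y i j = f i (j + 1)` and `y (i + 1) 0 = f i 0`. -/
def shiftPrimitive [AddMonoid R] (f : ℕ → ℕ → R) : ℕ → ℕ → R
  | 0, _ => 0
  | i + 1, 0 => f i 0
  | i + 1, j + 1 => shiftPrimitive f i j + f i (j + 1)

theorem shiftPrimitive_eq_zero [AddMonoid R] {f : ℕ → ℕ → R} (hf : ∀ i j, j < i → f i j = 0) :
    ∀ {i j : ℕ}, j + 1 < i → shiftPrimitive f i j = 0
  | 0, _, h => absurd h (Nat.not_lt_zero _)
  | i + 1, 0, h => hf i 0 (Nat.lt_of_succ_lt_succ h)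
  | i + 1, j + 1, h => by
    rw [shiftPrimitive, shiftPrimitive_eq_zero hf (by omega), hf i (j + 1) (by omega), add_zero]

theorem shiftPrimitive_succ_self [AddCommMonoid R] (f : ℕ → ℕ → R) (i : ℕ) :
    shiftPrimitive f (i + 1) i = ∑ k ∈ Finset.range (i + 1), f k k := by
  induction i with
  | zero => simp [shiftPrimitive]
  | succ i ih => rw [shiftPrimitive, ih, Finset.sum_range_succ _ (i + 1)]

/-- The `n × n` nilpotent shift matrix, with ones on the superdiagonal and zeros elsewhere. -/
def superdiagShift (R : Type*) [Zero R] [One R] (n : ℕ) : Matrix (Fin n) (Fin n) R :=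
  of fun i j => if (j : ℕ) = i + 1 then 1 else 0

theorem superdiagShift_apply_of_ne [Zero R] [One R] {n : ℕ} {i j : Fin n}
    (h : (j : ℕ) ≠ i + 1) : superdiagShift R n i j = 0 :=
  if_neg h

theorem superdiagShift_apply_of_eq [Zero R] [One R] {n : ℕ} {i j : Fin n}
    (h : (j : ℕ) = i + 1) : superdiagShift R n i j = 1 :=
  if_pos h

theorem superdiagShift_pow_apply_of_lt [Semiring R] {n k : ℕ} {i j : Fin n}
    (h : (j : ℕ) < i + k) : (superdiagShift R n ^ k) i j = 0 := by
  induction k generalizing j with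
  | zero => exact one_apply_ne (by rintro rfl; omega)
  | succ k ih =>
    rw [pow_succ, mul_apply]
    refine Finset.sum_eq_zero fun l _ => ?_
    by_cases hl : (j : ℕ) = l + 1
    · rw [ih (by omega), zero_mul]
    · rw [superdiagShift_apply_of_ne hl, mul_zero]

theorem isNilpotent_superdiagShift [Semiring R] (n : ℕ) : IsNilpotent (superdiagShift R n) :=
  ⟨n, by ext i j; exact superdiagShift_pow_apply_of_lt (by omega)⟩

theorem superdiagShift_mul_of_apply [NonAssocSemiring R] {n : ℕ} (y : ℕ → ℕ → R) (i j : Fin n) :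
    (superdiagShift R n * of fun i j : Fin n => y i j) i j =
      if (i : ℕ) + 1 < n then y (i + 1) j else 0 := by
  rw [mul_apply]
  split_ifs with hi
  · rw [Finset.sum_eq_single ⟨i + 1, hi⟩, superdiagShift_apply_of_eq rfl, one_mul, of_apply]
    · intro l _ hl
      rw [superdiagShift_apply_of_ne (Fin.val_ne_of_ne hl), zero_mul]
    · simp
  · refine Finset.sum_eq_zero fun l _ => ?_
    rw [superdiagShift_apply_of_ne (by omega), zero_mul]

theorem of_mul_superdiagShift_apply [NonAssocSemiring R] {n : ℕ} (y : ℕ → ℕ → R) (i j : Fin n) :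
    (of (fun i j : Fin n => y i j) * superdiagShift R n) i j =
      if 0 < (j : ℕ) then y i (j - 1) else 0 := by
  rw [mul_apply]
  split_ifs with hj
  · rw [Finset.sum_eq_single ⟨j - 1, by omega⟩,
      superdiagShift_apply_of_eq (Nat.sub_add_cancel hj).symm, mul_one, of_apply]
    · intro l _ hl
      have hl : (l : ℕ) ≠ j - 1 := Fin.val_ne_of_ne hl
      rw [superdiagShift_apply_of_ne (by omega), mul_zero]
    · simp
  · refine Finset.sum_eq_zero fun l _ => ?_
    rw [superdiagShift_apply_of_ne (by omega), mul_zero]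

end Shift

section Triangular

variable {R : Type*} [Ring R]

theorem exists_isNilpotent_of_blockTriangular_fin {n : ℕ} {M : Matrix (Fin n) (Fin n) R}
    (hM : M.BlockTriangular id) (htr : M.trace = 0) :
    ∃ X Y : Matrix (Fin n) (Fin n) R, IsNilpotent X ∧ M = X * Y - Y * X := by
  set f : ℕ → ℕ → R := fun i j => if h : i < n ∧ j < n then M ⟨i, h.1⟩ ⟨j, h.2⟩ else 0 with hf
  have hfM (i j : Fin n) : f i j = M i j := by simp [hf]
  have hlow (i j : ℕ) (h : j < i) : f i j = 0 := by
    simp only [hf]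
    split_ifs with hij
    exacts [hM h, rfl]
  have hsum : ∑ k ∈ Finset.range n, f k k = 0 := by
    rw [← htr, Finset.sum_range, trace]
    exact Finset.sum_congr rfl fun i _ => hfM i i
  have hlast (j : ℕ) (hj : j < n) : shiftPrimitive f n j = 0 := by
    obtain hj | rfl : j + 1 < n ∨ n = j + 1 := by omega
    · exact shiftPrimitive_eq_zero hlow hj
    · rw [shiftPrimitive_succ_self, hsum]
  refine ⟨superdiagShift R n, of fun i j : Fin n => shiftPrimitive f i j,
    isNilpotent_superdiagShift n, ?_⟩
  ext i j
  have hnext : (if (i : ℕ) + 1 < n then shiftPrimitive f (i + 1) j else 0) =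
      shiftPrimitive f (i + 1) j := by
    split_ifs with hi
    · rfl
    · rw [show (i : ℕ) + 1 = n by omega, hlast j j.2]
  rw [Matrix.sub_apply, superdiagShift_mul_of_apply, of_mul_superdiagShift_apply, hnext, ← hfM]
  rcases (j : ℕ) with _ | j <;> simp [shiftPrimitive]

variable {ι : Type*} [Fintype ι] [LinearOrder ι]

theorem exists_isNilpotent_of_blockTriangular_id {M : Matrix ι ι R} (hM : M.BlockTriangular id)
    (htr : M.trace = 0) : ∃ X Y : Matrix ι ι R, IsNilpotent X ∧ M = X * Y - Y * X := by
  let e := Fintype.orderIsoFinOfCardEq ι rfl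
  let φ := reindexRingEquiv R e.toEquiv
  obtain ⟨X, Y, hX, hXY⟩ := exists_isNilpotent_of_blockTriangular_fin
    (M := M.submatrix e e) (fun i j hij => hM (e.lt_iff_lt.2 hij))
    ((Equiv.sum_comp e.toEquiv fun i => M i i).trans htr)
  refine ⟨φ X, φ Y, hX.map φ, ?_⟩
  rw [← map_mul, ← map_mul, ← map_sub, ← hXY]
  ext i j
  simp [φ]

theorem isAddCommutator_of_blockTriangular_id {M : Matrix ι ι R} (hM : M.BlockTriangular id)
    (htr : M.trace = 0) : IsAddCommutator M :=
  let ⟨X, Y, _, h⟩ := exists_isNilpotent_of_blockTriangular_id hM htr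
  ⟨X, Y, h⟩

theorem isAddCommutator_of_forall_iff {M : Matrix ι ι R} (p : ι → Prop) [DecidablePred p]
    (hM : ∀ i j, j < i → (p i ↔ p j) → M i j = 0) (hp : ∑ i with p i, M i i = 0)
    (hnp : ∑ i with ¬p i, M i i = 0) : IsAddCommutator M := by
  obtain ⟨X₁, Y₁, h₁, e₁⟩ := exists_isNilpotent_of_blockTriangular_id
    (M := M.toSquareBlockProp p) (fun i j hij => hM i j hij (iff_of_true i.2 j.2))
    ((Finset.sum_subtype _ (by simp) _).symm.trans hp)
  obtain ⟨X₂, Y₂, h₂, e₂⟩ := exists_isNilpotent_of_blockTriangular_id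
    (M := M.toSquareBlockProp fun i => ¬p i) (fun i j hij => hM i j hij (iff_of_false i.2 j.2))
    ((Finset.sum_subtype _ (by simp) _).symm.trans hnp)
  have h := isAddCommutator_fromBlocks (Y₁ := Y₁) (Y₂ := Y₂) h₁ h₂
    (M.toBlock p fun i => ¬p i) (M.toBlock (fun i => ¬p i) p)
  rw [← e₁, ← e₂] at h
  convert h.map (reindexRingEquiv R (Equiv.sumCompl p) : _ →+* Matrix ι ι R)
  exact (reindex _ _).symm_apply_eq.1 (fromBlocks_toBlocks _).symm

end Triangular

section Hessenberg

variable {n : ℕ} {R : Type*}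

/-- `M` is an upper Hessenberg matrix: its entries below the first subdiagonal vanish. -/
def IsUpperHessenberg [Zero R] (M : Matrix (Fin n) (Fin n) R) : Prop :=
  ∀ i j : Fin n, (j : ℕ) + 1 < i → M i j = 0

theorem IsUpperHessenberg.isAddCommutator [Ring R] {M : Matrix (Fin n) (Fin n) R}
    (hM : IsUpperHessenberg M) (heven : ∑ i : Fin n with Even i.val, M i i = 0)
    (hodd : ∑ i : Fin n with ¬Even i.val, M i i = 0) : IsAddCommutator M := by
  refine isAddCommutator_of_forall_iff (fun i => Even i.val) (fun i j hij h => hM i j ?_) heven hodd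
  grind

end Hessenberg

theorem permMatrix_apply_of_ne {ι R : Type*} [DecidableEq ι] [Zero R] [One R] {σ : Equiv.Perm ι}
    {i j : ι} (h : σ i ≠ j) : σ.permMatrix R i j = 0 := by
  simp [PEquiv.toMatrix_apply, h]

section Central

variable {R : Type*} [Ring R]

theorem isAddCommutator_permMatrix_finRotate (n : ℕ) :
    IsAddCommutator ((finRotate (n + 2)).permMatrix R) := by
  have hdiag (i : Fin (n + 2)) : (finRotate (n + 2)).permMatrix R i i = 0 :=
    permMatrix_apply_of_ne (by simp [finRotate_apply])
  refine isAddCommutator_of_forall_iff (· = Fin.last _) (fun i j hji h => ?_)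
    (Finset.sum_eq_zero fun i _ => hdiag i) (Finset.sum_eq_zero fun i _ => hdiag i)
  have hi : i ≠ Fin.last _ := fun hi => hji.ne ((h.1 hi).trans hi.symm)
  refine permMatrix_apply_of_ne fun hij => ?_
  rw [← hij, Fin.lt_def, coe_finRotate_of_ne_last hi] at hji
  omega

theorem isAddCommutator_permMatrix_finRotate_inv (n : ℕ) :
    IsAddCommutator ((finRotate (n + 2))⁻¹.permMatrix R) := by
  have hdiag (i : Fin (n + 2)) : (finRotate (n + 2))⁻¹.permMatrix R i i = 0 :=
    permMatrix_apply_of_ne (by simp)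
  refine IsUpperHessenberg.isAddCommutator (fun i j hji => ?_)
    (Finset.sum_eq_zero fun i _ => hdiag i) (Finset.sum_eq_zero fun i _ => hdiag i)
  have hj : j ≠ Fin.last _ := Fin.ne_last_of_lt (Fin.lt_def.2 (by omega : (j : ℕ) < i))
  refine permMatrix_apply_of_ne fun hij => ?_
  rw [Equiv.Perm.inv_eq_iff_eq.1 hij, coe_finRotate_of_ne_last hj] at hji
  omega

theorem isAddCommutatorProduct_of_mem_center {n : ℕ} (hn : 2 ≤ n) {A : Matrix (Fin n) (Fin n) R}
    (hA : A ∈ Set.center (Matrix (Fin n) (Fin n) R)) : IsAddCommutatorProduct A := by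
  obtain ⟨n, rfl⟩ := Nat.exists_eq_add_of_le' hn
  refine ⟨_, _, isAddCommutator_permMatrix_finRotate n,
    (isAddCommutator_permMatrix_finRotate_inv n).mul_of_mem_center hA, ?_⟩
  rw [← mul_assoc, ← Matrix.permMatrix_mul, inv_mul_cancel, Matrix.permMatrix_one, one_mul]

end Central

theorem isConj_submatrix {n R : Type*} [Fintype n] [DecidableEq n] [Semiring R] (A : Matrix n n R)
    (σ : Equiv.Perm n) : IsConj A (A.submatrix σ σ) := by
  refine ⟨⟨σ.permMatrix R, σ⁻¹.permMatrix R, ?_, ?_⟩, ?_⟩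
  · rw [← permMatrix_mul, inv_mul_cancel, permMatrix_one]
  · rw [← permMatrix_mul, mul_inv_cancel, permMatrix_one]
  · ext i j
    simp [PEquiv.toMatrix_toPEquiv_mul, PEquiv.mul_toMatrix_toPEquiv]

section Conjugation

theorem isConj_one_add_mul_one_sub {R : Type*} [Ring R] {a N : R} (hN : N * N = 0) :
    IsConj a ((1 + N) * a * (1 - N)) := by
  have h₁ : (1 + N) * (1 - N) = 1 := by simp [mul_sub, add_mul, hN]
  have h₂ : (1 - N) * (1 + N) = 1 := by simp [mul_add, sub_mul, hN]
  refine ⟨⟨1 + N, 1 - N, h₁, h₂⟩, ?_⟩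
  rw [SemiconjBy, Units.val_mk, mul_assoc _ (1 - N), h₂, mul_one]

variable {n R : Type*} [Fintype n] [DecidableEq n] [Ring R]

theorem exists_isConj_add_vecMulVec (A : Matrix n n R) {x : n → R} {p : n} (hx : x p = 0) :
    ∃ B, IsConj A B ∧ (∀ i j, j ≠ p → B i j = A i j + x i * A p j) ∧
      ∀ i, B i p = A i p + x i * A p p - ∑ l, (A i l + x i * A p l) * x l := by
  refine ⟨_, isConj_one_add_mul_one_sub (N := vecMulVec x (Pi.single p 1)) ?_, ?_, ?_⟩
  · rw [vecMulVec_mul_vecMulVec]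
    simp [hx]
  · intro i j hj
    simp [Matrix.add_mul, Matrix.mul_sub, Matrix.mul_vecMulVec, vecMulVec_mul, vecMulVec_apply, hj]
  · intro i
    simp [Matrix.add_mul, Matrix.mul_sub, Matrix.mul_vecMulVec, vecMulVec_mul, vecMulVec_apply,
      mulVec, dotProduct]

theorem exists_isConj_add_mul_row (A : Matrix n n R) {p q : n} (hpq : p ≠ q) (s : R) :
    ∃ B, IsConj A B ∧ (∀ i j, i ≠ q → j ≠ p → B i j = A i j) ∧
      (∀ j, j ≠ p → B q j = A q j + s * A p j) ∧ (∀ i, i ≠ q → B i p = A i p - A i q * s) ∧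
      B q p = A q p + s * A p p - (A q q + s * A p q) * s := by
  obtain ⟨B, hAB, hne, hp⟩ :=
    exists_isConj_add_vecMulVec A (x := Pi.single q s) (p := p) (by simp [hpq])
  refine ⟨B, hAB, fun i j hi hj => ?_, fun j hj => ?_, fun i hi => ?_, ?_⟩
  · simp [hne i j hj, hi]
  · simp [hne q j hj]
  · simp [hp, hi, Pi.single_apply]
  · simp [hp, Pi.single_apply]

theorem mem_center_of_forall_isConj_apply_eq_zero {A : Matrix n n R} {p q : n} (hpq : p ≠ q)
    (h : ∀ B, IsConj A B → B p q = 0) : A ∈ Set.center (Matrix n n R) := by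
  have hoff {B : Matrix n n R} (hB : IsConj A B) {i j : n} (hij : i ≠ j) : B i j = 0 := by
    let σ := (Equiv.swap p i).trans (Equiv.swap (Equiv.swap p i q) j)
    have hp : σ p = i := by
      have : i ≠ Equiv.swap p i q := fun h => hpq ((Equiv.swap p i).injective (by simpa using h))
      simp [σ, Equiv.swap_apply_of_ne_of_ne this hij]
    have hq : σ q = j := by simp [σ]
    simpa [hp, hq] using h _ (hB.trans (isConj_submatrix B σ))
  have hcomm {i j : n} (hij : i ≠ j) (t : R) : t * A j j = A i i * t := by
    obtain ⟨B, hAB, -, -, -, hB⟩ := exists_isConj_add_mul_row A hij.symm t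
    rw [hoff hAB hij, hoff (.refl A) hij, hoff (.refl A) hij.symm, mul_zero, add_zero,
      zero_add] at hB
    exact sub_eq_zero.1 hB.symm
  have hconst (i : n) : A i i = A p p := by
    obtain rfl | hi := eq_or_ne i p
    · rfl
    · simpa using (hcomm hi 1).symm
  rw [Matrix.center_eq_scalar_image]
  refine ⟨A p p, Semigroup.mem_center_iff.2 fun t => ?_, ?_⟩
  · rw [← hcomm hpq, hconst q]
  · ext i j
    obtain rfl | hij := eq_or_ne i j
    · simp [hconst]
    · simp [hij, hoff (.refl A) hij]

theorem exists_isConj_apply_ne_zero {A : Matrix n n R} (hA : A ∉ Set.center (Matrix n n R))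
    {p q : n} (hpq : p ≠ q) : ∃ B, IsConj A B ∧ B p q ≠ 0 := by
  by_contra! h
  exact hA (mem_center_of_forall_isConj_apply_eq_zero hpq h)

end Conjugation

section NormalForm

variable {D : Type*} [DivisionRing D] {n : ℕ}

theorem exists_isConj_clear_column_of_ne_zero {A : Matrix (Fin n) (Fin n) D} {k q : Fin n}
    (hkq : k < q) (hA : ∀ j < k, A q j = 0) (hqk : A q k ≠ 0) :
    ∃ B, IsConj A B ∧ (∀ j < k, ∀ i, B i j = A i j) ∧ (∀ i ≤ q, B i k = A i k) ∧
      ∀ i > q, B i k = 0 := by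
  let x : Fin n → D := fun i => if q < i then -(A i k * (A q k)⁻¹) else 0
  obtain ⟨B, hAB, hB, -⟩ := exists_isConj_add_vecMulVec A (x := x) (p := q) (if_neg (lt_irrefl q))
  refine ⟨B, hAB, fun j hj i => ?_, fun i hi => ?_, fun i hi => ?_⟩
  · rw [hB i j (hj.trans hkq).ne, hA j hj, mul_zero, add_zero]
  · rw [hB i k hkq.ne, show x i = 0 from if_neg hi.not_gt, zero_mul, add_zero]
  · rw [hB i k hkq.ne, show x i = _ from if_pos hi, neg_mul, inv_mul_cancel_right₀ hqk,
      add_neg_cancel]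

theorem exists_isConj_clear_column {A : Matrix (Fin n) (Fin n) D} {k q : Fin n}
    (hkq : k < q) (hA : ∀ j < k, ∀ i ≥ q, A i j = 0) :
    ∃ B, IsConj A B ∧ (∀ j < k, ∀ i, B i j = A i j) ∧ (A q k ≠ 0 → B q k = A q k) ∧
      ∀ i > q, B i k = 0 := by
  by_cases hqk : A q k = 0
  · by_cases h : ∃ p > q, A p k ≠ 0
    · obtain ⟨p, hpq, hpk⟩ := h
      obtain ⟨C, hAC, hrow, hq, -, -⟩ := exists_isConj_add_mul_row A hpq.ne' 1
      have hCA : ∀ j < k, ∀ i, C i j = A i j := fun j hj i => by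
        have hjp : j ≠ p := ((hj.trans hkq).trans hpq).ne
        obtain rfl | hi := eq_or_ne i q
        · rw [hq j hjp, hA j hj p hpq.le, mul_zero, add_zero]
        · exact hrow i j hi hjp
      have hCqk : C q k ≠ 0 := by
        rwa [hq k (hkq.trans hpq).ne, hqk, zero_add, one_mul]
      obtain ⟨B, hCB, hlt, -, hgt⟩ := exists_isConj_clear_column_of_ne_zero hkq
        (fun j hj => by rw [hCA j hj, hA j hj q le_rfl]) hCqk
      exact ⟨B, hAC.trans hCB, fun j hj i => by rw [hlt j hj, hCA j hj],
        fun h => absurd hqk h, hgt⟩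
    · push Not at h
      exact ⟨A, .refl A, fun _ _ _ => rfl, fun _ => rfl, h⟩
  · obtain ⟨B, hAB, hlt, hle, hgt⟩ :=
      exists_isConj_clear_column_of_ne_zero hkq (fun j hj => hA j hj q le_rfl) hqk
    exact ⟨B, hAB, hlt, fun _ => hle q le_rfl, hgt⟩

theorem exists_isConj_isUpperHessenberg {A : Matrix (Fin (n + 2)) (Fin (n + 2)) D}
    (hA : A 1 0 ≠ 0) : ∃ B, IsConj A B ∧ IsUpperHessenberg B ∧ B 1 0 ≠ 0 := by
  have key (k : ℕ) : ∃ B, IsConj A B ∧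
      (∀ i j : Fin (n + 2), (j : ℕ) < k → (j : ℕ) + 1 < i → B i j = 0) ∧ B 1 0 ≠ 0 := by
    induction k with
    | zero => exact ⟨A, .refl A, fun _ _ h => absurd h (Nat.not_lt_zero _), hA⟩
    | succ k ih =>
      obtain ⟨B, hAB, hB, hB10⟩ := ih
      obtain hk | hk := Nat.lt_or_ge (k + 1) (n + 2)
      · obtain ⟨C, hBC, hlt, hq, hgt⟩ := exists_isConj_clear_column (A := B)
          (k := ⟨k, by omega⟩) (q := ⟨k + 1, hk⟩) (Fin.mk_lt_mk.2 k.lt_succ_self)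
          fun j hj i hi => hB i j hj (Nat.lt_of_lt_of_le (Nat.succ_lt_succ hj) hi)
        refine ⟨C, hAB.trans hBC, fun i j hj hij => ?_, ?_⟩
        · obtain hj | rfl := Nat.lt_succ_iff_lt_or_eq.1 hj
          · rw [hlt j hj, hB i j hj hij]
          · exact hgt i hij
        · obtain rfl | hk := k.eq_zero_or_pos
          · exact (hq hB10).trans_ne hB10
          · exact (hlt 0 hk 1).trans_ne hB10
      · exact ⟨B, hAB, fun i j _ hij => hB i j (by omega) hij, hB10⟩
  obtain ⟨B, hAB, hB, hB10⟩ := key (n + 2)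
  exact ⟨B, hAB, fun i j => hB i j j.2, hB10⟩

theorem exists_isConj_sum_not_even_eq_zero {A : Matrix (Fin (n + 2)) (Fin (n + 2)) D}
    (hA : A ∉ Set.center (Matrix (Fin (n + 2)) (Fin (n + 2)) D)) {r : Fin (n + 2) → D}
    (hr : r 1 ≠ 0) :
    ∃ B, IsConj A B ∧ IsUpperHessenberg B ∧ B 1 0 ≠ 0 ∧
      ∑ i : Fin (n + 2) with ¬Even i.val, r i * B i i = 0 := by
  obtain ⟨C, hAC, hC10⟩ := exists_isConj_apply_ne_zero hA one_ne_zero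
  obtain ⟨H, hCH, hH, hH10⟩ := exists_isConj_isUpperHessenberg hC10
  set t := ∑ i : Fin (n + 2) with ¬Even i.val, r i * H i i with ht
  obtain ⟨B, hHB, hrest, -, hcol, -⟩ :=
    exists_isConj_add_mul_row H (p := 1) (q := 0) one_ne_zero ((r 1 * H 1 0)⁻¹ * t)
  refine ⟨B, (hAC.trans hCH).trans hHB, fun i j hij => ?_, ?_, ?_⟩
  · have hi : i ≠ 0 := by rintro rfl; simp at hij
    obtain rfl | hj := eq_or_ne j 1
    · rw [hcol i hi, hH i 1 hij, hH i 0 (lt_trans (by simp) hij), zero_mul, sub_zero]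
    · rw [hrest i j hi hj, hH i j hij]
  · rwa [hrest 1 0 one_ne_zero zero_ne_one]
  · have hterm (i : Fin (n + 2)) (hi : i ∈ ({i | ¬Even i.val} : Finset (Fin (n + 2)))) :
        r i * B i i = r i * H i i - if i = 1 then t else 0 := by
      split_ifs with h1
      · rw [h1, hcol 1 one_ne_zero, mul_sub, ← mul_assoc (r 1),
          mul_inv_cancel_left₀ (mul_ne_zero hr hH10)]
      · rw [hrest i i (by rintro rfl; simp at hi) h1, sub_zero]
    rw [Finset.sum_congr rfl hterm, Finset.sum_sub_distrib, ← ht, Finset.sum_ite_eq']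
    simp

end NormalForm

section Factorization

variable {D : Type*} [DivisionRing D] {n : ℕ}

theorem isAddCommutator_one_sub_single_mul_diagonal {ι R : Type*} [Fintype ι] [LinearOrder ι]
    [Ring R] {p q : ι} (hpq : p < q) {d : ι → R} (hd : ∑ i, d i = 0) (u : R) :
    IsAddCommutator ((1 - single p q u) * diagonal d) := by
  refine isAddCommutator_of_blockTriangular_id (fun i j hji => ?_) ?_
  · have hij : i ≠ j := hji.ne'
    have hpqij : ¬(p = i ∧ q = j) := by
      rintro ⟨rfl, rfl⟩
      exact hpq.asymm hji
    simp [one_apply_ne hij, hpqij]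
  · have hdiag (i : ι) : ((1 - single p q u) * diagonal d) i i = d i := by
      have hpqi : ¬(p = i ∧ q = i) := fun h => hpq.ne (h.1.trans h.2.symm)
      simp [hpqi]
    exact (Finset.sum_congr rfl fun i _ => hdiag i).trans hd

theorem IsUpperHessenberg.isAddCommutatorProduct {B : Matrix (Fin (n + 2)) (Fin (n + 2)) D}
    (hB : IsUpperHessenberg B) (hB10 : B 1 0 ≠ 0) {d : Fin (n + 2) → D} (hd : ∀ i, d i ≠ 0)
    (hsum : ∑ i, d i = 0) (hodd : ∑ i : Fin (n + 2) with ¬Even i.val, (d i)⁻¹ * B i i = 0) :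
    IsAddCommutatorProduct B := by
  set t := ∑ i : Fin (n + 2) with Even i.val, (d i)⁻¹ * B i i with ht
  let N : Matrix (Fin (n + 2)) (Fin (n + 2)) D := single 0 1 (-(d 0 * t * (B 1 0)⁻¹))
  have hN : N * N = 0 := single_mul_single_of_ne _ _ _ _ one_ne_zero _
  have hQ (i j : Fin (n + 2)) (hi : i ≠ 0) :
      (diagonal d⁻¹ * ((1 + N) * B)) i j = (d i)⁻¹ * B i j := by
    simp [Matrix.add_mul, N, hi]
  have hQ0 : (diagonal d⁻¹ * ((1 + N) * B)) 0 0 = (d 0)⁻¹ * B 0 0 - t := by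
    simp [Matrix.add_mul, N, mul_sub, ← sub_eq_add_neg, hB10, mul_assoc, hd]
  refine ⟨(1 - N) * diagonal d, diagonal d⁻¹ * ((1 + N) * B), ?_, ?_, ?_⟩
  · exact isAddCommutator_one_sub_single_mul_diagonal Fin.zero_lt_one hsum _
  · refine IsUpperHessenberg.isAddCommutator (fun i j hij => ?_) ?_ ?_
    · rw [hQ i j (by rintro rfl; simp at hij), hB i j hij, mul_zero]
    · have hterm (i : Fin (n + 2)) : (diagonal d⁻¹ * ((1 + N) * B)) i i =
          (d i)⁻¹ * B i i - if i = 0 then t else 0 := by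
        split_ifs with hi
        · rw [hi, hQ0]
        · rw [hQ i i hi, sub_zero]
      simp only [hterm, Finset.sum_sub_distrib, Finset.sum_ite_eq', ← ht]
      simp
    · rw [← hodd]
      exact Finset.sum_congr rfl fun i hi => hQ i i (by rintro rfl; simp at hi)
  · rw [← mul_assoc, mul_assoc (1 - N), diagonal_mul_diagonal']
    simp [hd, ← mul_assoc, mul_one_add, sub_mul, hN]

end Factorization

theorem exists_ne_zero_sum_eq_zero {R : Type*} [Ring R] [Nontrivial R] {a : R} (ha₀ : a ≠ 0)
    (ha₁ : a ≠ 1) : ∀ n : ℕ, ∃ d : Fin (n + 2) → R, (∀ i, d i ≠ 0) ∧ ∑ i, d i = 0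
  | 0 => ⟨![1, -1], by simp [Fin.forall_fin_two], by simp⟩
  | 1 => ⟨![a, 1 - a, -1], by simp [Fin.forall_fin_succ, ha₀, sub_ne_zero, ha₁.symm],
      by simp [Fin.sum_univ_three]⟩
  | n + 2 => by
    obtain ⟨d, hd, hsum⟩ := exists_ne_zero_sum_eq_zero ha₀ ha₁ n
    exact ⟨Fin.cons 1 (Fin.cons (-1) d), by simp [Fin.forall_fin_succ (n := _ + 1), hd],
      by rw [Fin.sum_cons, Fin.sum_cons, hsum, add_zero, add_neg_cancel]⟩

theorem trace_eq_of_isConj {n R : Type*} [Fintype n] [DecidableEq n] [CommRing R]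
    {A B : Matrix n n R} (h : IsConj A B) : A.trace = B.trace := by
  obtain ⟨u, hu⟩ := h
  rw [← trace_units_conj u A, hu.eq, Units.mul_inv_cancel_right]

section Field

variable {K : Type*} [Field K]

theorem isAddCommutator_of_trace_eq_zero {n : ℕ} {A : Matrix (Fin (n + 2)) (Fin (n + 2)) K}
    (hA : A.trace = 0) : IsAddCommutator A := by
  by_cases hc : A ∈ Set.center (Matrix (Fin (n + 2)) (Fin (n + 2)) K)
  · rw [center_eq_scalar_image] at hc
    obtain ⟨c, -, rfl⟩ := hc
    exact isAddCommutator_of_blockTriangular_id (blockTriangular_diagonal _) hA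
  · obtain ⟨B, hAB, hB, -, hodd⟩ := exists_isConj_sum_not_even_eq_zero hc (r := 1) one_ne_zero
    simp only [Pi.one_apply, one_mul] at hodd
    refine (hB.isAddCommutator ?_ hodd).of_isConj hAB
    have hsplit := Finset.sum_filter_add_sum_filter_not Finset.univ (fun i => Even i.val)
      fun i => B i i
    rw [hodd, add_zero] at hsplit
    exact hsplit.trans ((trace_eq_of_isConj hAB).symm.trans hA)

theorem exists_trace_eq_zero_mul_eq {n : Type*} [Fintype n] {A : Matrix n n K}
    {i j k : n} (hij : i ≠ j) (hik : i ≠ k) (hjk : j ≠ k) (hA : A k i ≠ 0) :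
    ∃ P Q : Matrix n n K, P.trace = 0 ∧ Q.trace = 0 ∧ A = P * Q := by
  classical
  -- The `(i, j)` entry of `N` cancels the trace of `W`, the `(i, k)` entry that of `W * A`.
  let W : Matrix n n K := (Equiv.swap i j).permMatrix K
  let y : K := -((W * A).trace + W.trace * A i i) / A k i
  let N : Matrix n n K := single i j W.trace + single i k y
  have hW : W * W = 1 := by
    rw [← permMatrix_mul, Equiv.swap_mul_self, permMatrix_one]
  have hN : N * N = 0 := by
    simp [N, mul_add, add_mul, hij.symm, hik.symm]
  have hWapply (B : Matrix n n K) (l : n) : (W * B) l = B (Equiv.swap i j l) := by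
    ext; simp [W, PEquiv.toMatrix_toPEquiv_mul]
  refine ⟨W * (1 - N), (1 + N) * (W * A), ?_, ?_, ?_⟩
  · have hWji : W j i = 1 := by simp [W, PEquiv.toMatrix_apply]
    have hWki : W k i = 0 :=
      permMatrix_apply_of_ne ((Equiv.swap_apply_of_ne_of_ne hik.symm hjk.symm).trans_ne hik.symm)
    rw [mul_sub, mul_one, trace_sub, trace_mul_comm, add_mul, trace_add, trace_single_mul,
      trace_single_mul, hWji, hWki]
    simp
  · have htrace : ((1 + N) * (W * A)).trace =
        (W * A).trace + W.trace * A i i + y * A k i := by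
      simp [add_mul, N, trace_single_mul, hWapply,
        Equiv.swap_apply_of_ne_of_ne hik.symm hjk.symm, add_assoc]
    rw [htrace, div_mul_cancel₀ _ hA, add_neg_cancel]
  · have : (1 - N) * (1 + N) = 1 := by simp [mul_add, sub_mul, hN]
    rw [mul_assoc, ← mul_assoc (1 - N), this, one_mul, ← mul_assoc, hW, one_mul]

theorem isAddCommutatorProduct_of_notMem_center_of_field {n : ℕ}
    {A : Matrix (Fin (n + 3)) (Fin (n + 3)) K}
    (hA : A ∉ Set.center (Matrix (Fin (n + 3)) (Fin (n + 3)) K)) : IsAddCommutatorProduct A := by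
  obtain ⟨B, hAB, hB⟩ := exists_isConj_apply_ne_zero hA one_ne_zero
  obtain ⟨P, Q, hP, hQ, rfl⟩ := exists_trace_eq_zero_mul_eq (j := ⟨2, by omega⟩)
    (by simp [Fin.ext_iff]) zero_ne_one (by simp [Fin.ext_iff]) hB
  have hPQ : IsAddCommutatorProduct (P * Q) :=
    ⟨P, Q, isAddCommutator_of_trace_eq_zero hP, isAddCommutator_of_trace_eq_zero hQ, rfl⟩
  exact hPQ.of_isConj hAB

end Field

theorem mul_comm_of_forall_eq_zero_or_one {M : Type*} [MulZeroOneClass M]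
    (h : ∀ a : M, a = 0 ∨ a = 1) (a b : M) : a * b = b * a := by
  rcases h a with rfl | rfl <;> simp

section Product

variable {D : Type*} [DivisionRing D]

theorem isAddCommutatorProduct_of_sum_eq_zero {n : ℕ} {A : Matrix (Fin (n + 2)) (Fin (n + 2)) D}
    (hA : A ∉ Set.center (Matrix (Fin (n + 2)) (Fin (n + 2)) D)) {d : Fin (n + 2) → D}
    (hd : ∀ i, d i ≠ 0) (hsum : ∑ i, d i = 0) : IsAddCommutatorProduct A :=
  let ⟨_, hAB, hB, hB10, hodd⟩ := exists_isConj_sum_not_even_eq_zero hA (inv_ne_zero (hd 1))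
  (hB.isAddCommutatorProduct hB10 hd hsum hodd).of_isConj hAB

theorem isAddCommutatorProduct_of_notMem_center {n : ℕ} {A : Matrix (Fin (n + 2)) (Fin (n + 2)) D}
    (hA : A ∉ Set.center (Matrix (Fin (n + 2)) (Fin (n + 2)) D)) : IsAddCommutatorProduct A := by
  by_cases! h : ∃ a : D, a ≠ 0 ∧ a ≠ 1
  · obtain ⟨a, ha₀, ha₁⟩ := h
    obtain ⟨d, hd, hsum⟩ := exists_ne_zero_sum_eq_zero ha₀ ha₁ n
    exact isAddCommutatorProduct_of_sum_eq_zero hA hd hsum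
  · cases n with
    | zero =>
      exact isAddCommutatorProduct_of_sum_eq_zero hA (d := ![1, -1])
        (by simp [Fin.forall_fin_two]) (by simp)
    | succ n =>
      have hcomm : ∀ a b : D, a * b = b * a :=
        mul_comm_of_forall_eq_zero_or_one fun a => or_iff_not_imp_left.2 (h a)
      let _ : Field D := { ‹DivisionRing D› with mul_comm := hcomm }
      exact isAddCommutatorProduct_of_notMem_center_of_field hA

theorem stmt_11_general (D : Type*) [DivisionRing D] (n : ℕ) (hn : 2 ≤ n)
    (A : Matrix (Fin n) (Fin n) D) :
    ∃ B C E G : Matrix (Fin n) (Fin n) D,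
      A = (B * C - C * B) * (E * G - G * E) := by
  obtain ⟨_, _, ⟨B, C, rfl⟩, ⟨E, G, rfl⟩, hA⟩ : IsAddCommutatorProduct A := by
    by_cases hA : A ∈ Set.center (Matrix (Fin n) (Fin n) D)
    · exact isAddCommutatorProduct_of_mem_center hn hA
    · obtain ⟨n, rfl⟩ := Nat.exists_eq_add_of_le' hn
      exact isAddCommutatorProduct_of_notMem_center hA
  exact ⟨B, C, E, G, hA⟩

end Product

/-- If `D` is a division ring every element of which is algebraic over
its center `F`, and `n ≥ 2`, then every matrix in `M_n(D)` is a product of two additive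
commutators. -/
theorem stmt_11 (D : Type*) [DivisionRing D]
    (halg : ∀ a : D, ∃ p : Polynomial (Subring.center D),
      p ≠ 0 ∧ Polynomial.aeval a p = 0)
    (n : ℕ) (hn : 2 ≤ n) (A : Matrix (Fin n) (Fin n) D) :
    ∃ B C E G : Matrix (Fin n) (Fin n) D,
      A = (B * C - C * B) * (E * G - G * E) :=
  stmt_11_general D n hn A
end
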